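/- arXiv:2304.11813 — 2 statements merged into one kernel-verified Lean document; each statement's English description precedes it below -/
import Mathlib

section
/- Let N ≥ 1 and L ≥ 2 be integers and z_{μν} ∈ ℤ antisymmetric for μ,ν ∈ {1,2,3,4}. Define the field z_{μν}(n) = z_{μν}·δ_{n_μ,L−1}·δ_{n_ν,L−1} on the periodic lattice Λ = (ℤ/Lℤ)⁴. Then z_{μν}(n) is exactly flat: for every μ ∈ {1,2,3,4} and every n ∈ Λ, (1/2) Σ_{ν,ρ,σ} ε_{μνρσ} Δ_ν z_{ρσ}(n) = 0; in particular it is flat modulo N. -/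
open scoped BigOperators

noncomputable section

/-- The totally antisymmetric Levi-Civita symbol on four indices in `Fin 4`,
with `levicivita 0 1 2 3 = 1`. -/
noncomputable def levicivita (μ ν ρ σ : Fin 4) : ℤ :=
  if h : Function.Bijective ![μ, ν, ρ, σ] then Equiv.Perm.sign (Equiv.ofBijective _ h) else 0

/-- The 2-form gauge field `z_{μν}(n) = z_{μν} δ_{n_μ,L−1} δ_{n_ν,L−1}` on the
periodic lattice `Λ = (ℤ/Lℤ)⁴`. -/
noncomputable def zFieldP (L : ℕ) (z : Fin 4 → Fin 4 → ℤ)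
    (μ ν : Fin 4) (n : Fin 4 → ZMod L) : ℤ :=
  if n μ = (L : ZMod L) - 1 ∧ n ν = (L : ZMod L) - 1 then z μ ν else 0

/-- The corner-concentrated 2-form field `z_{μν}(n)` is exactly flat:
`(1/2) Σ_{ν,ρ,σ} ε_{μνρσ} Δ_ν z_{ρσ}(n) = 0`; in particular it is flat modulo `N`. -/
theorem zFieldP_flat
    (N L : ℕ) (hN : 1 ≤ N) (hL : 2 ≤ L)
    (z : Fin 4 → Fin 4 → ℤ) (hz : ∀ μ ν, z μ ν = - z ν μ) :
    ∀ (μ : Fin 4) (n : Fin 4 → ZMod L),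
      ((1 : ℚ) / 2) * ∑ ν : Fin 4, ∑ ρ : Fin 4, ∑ σ : Fin 4,
          (levicivita μ ν ρ σ : ℚ) *
            ((zFieldP L z ρ σ (n + Pi.single ν 1) : ℚ) - (zFieldP L z ρ σ n : ℚ))
        = 0 ∧
      ∃ k : ℤ,
        ((1 : ℚ) / 2) * ∑ ν : Fin 4, ∑ ρ : Fin 4, ∑ σ : Fin 4,
            (levicivita μ ν ρ σ : ℚ) *
              ((zFieldP L z ρ σ (n + Pi.single ν 1) : ℚ) - (zFieldP L z ρ σ n : ℚ))
          = (N : ℚ) * (k : ℚ) := by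
  intro μ n
  have key : ∀ ν ρ σ : Fin 4, (levicivita μ ν ρ σ : ℚ) *
      ((zFieldP L z ρ σ (n + Pi.single ν 1) : ℚ) - (zFieldP L z ρ σ n : ℚ)) = 0 := by
    intro ν ρ σ
    by_cases h : Function.Bijective ![μ, ν, ρ, σ]
    · have h1 : ρ ≠ ν := by
        intro e
        have := @h.1 1 2 (by simp [e])
        simp at this
      have h2 : σ ≠ ν := by
        intro e
        have := @h.1 1 3 (by simp [e])
        simp at this
      simp [zFieldP, Pi.single_eq_of_ne h1, Pi.single_eq_of_ne h2]
    · rw [levicivita, dif_neg h]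
      simp
  simp only [key]
  exact ⟨by simp, 0, by simp⟩

end
end

section
/- Let L ≥ 2 be an integer and let z̄_{μν}(n) be an antisymmetric integer field on the periodic lattice Λ = (ℤ/Lℤ)⁴ that is exactly flat, i.e., Σ_{ν,ρ,σ} ε_{μνρσ} Δ_ν z̄_{ρσ}(n) = 0 for every μ and n. Then (1/8) Σ_{n∈Λ} Σ_{μ,ν,ρ,σ} ε_{μνρσ} z̄_{μν}(n) z̄_{ρσ}(n + μ̂ + ν̂) ∈ ℤ. In particular, for every integer N ≥ 1 the fractional part of the lattice topological charge, −(1/8N) Σ_{n∈Λ} Σ_{μ,ν,ρ,σ} ε_{μνρσ} z̄_{μν}(n) z̄_{ρσ}(n + μ̂ + ν̂), lies in (1/N)·ℤ. -/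
open scoped BigOperators

noncomputable section

namespace PS

/-- Sign of the difference of two indices. -/
def sg (a b : Fin 4) : ℤ := if a < b then 1 else if b < a then -1 else 0

/-- Explicit formula for the Levi-Civita symbol. -/
def lc (a b c d : Fin 4) : ℤ := sg a b * sg a c * sg a d * sg b c * sg b d * sg c d

set_option maxRecDepth 100000 in
theorem sign_lc : ∀ e : Equiv.Perm (Fin 4),
    ((Equiv.Perm.sign e : ℤˣ) : ℤ) = lc (e 0) (e 1) (e 2) (e 3) := by
  decide

set_option maxRecDepth 100000 in
theorem lc_zero : ∀ a b c d : Fin 4, lc a b c d ≠ 0 →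
    a ≠ b ∧ a ≠ c ∧ a ≠ d ∧ b ≠ c ∧ b ≠ d ∧ c ≠ d := by
  decide

theorem lc_eq (a b c d : Fin 4) : levicivita a b c d = lc a b c d := by
  unfold levicivita
  split_ifs with h
  · rw [sign_lc]
    simp [Equiv.ofBijective]
  · by_contra h0
    obtain ⟨h1, h2, h3, h4, h5, h6⟩ := lc_zero a b c d (fun hh => h0 hh.symm)
    apply h
    apply Function.Injective.bijective_of_finite
    intro i j hij
    fin_cases i <;> fin_cases j <;> simp_all

variable {L : ℕ}

abbrev Pt (L : ℕ) := Fin 4 → ZMod L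

def e (L : ℕ) (μ : Fin 4) : Pt L := Pi.single μ 1

def Closed (z : Fin 4 → Fin 4 → Pt L → ℤ) : Prop :=
  ∀ τ ρ σ n, (z ρ σ (n + e L τ) - z ρ σ n) + (z σ τ (n + e L ρ) - z σ τ n)
    + (z τ ρ (n + e L σ) - z τ ρ n) = 0

theorem closed_of_flat (z : Fin 4 → Fin 4 → Pt L → ℤ)
    (hanti : ∀ μ ν n, z μ ν n = - z ν μ n)
    (hflat : ∀ (μ : Fin 4) (n : Fin 4 → ZMod L),
      ∑ ν : Fin 4, ∑ ρ : Fin 4, ∑ σ : Fin 4,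
        levicivita μ ν ρ σ * (z ρ σ (n + Pi.single ν 1) - z ρ σ n) = 0) : Closed z := by
  intro τ ρ σ n
  have h0 := hflat 0 n
  have h1 := hflat 1 n
  have h2 := hflat 2 n
  have h3 := hflat 3 n
  simp only [lc_eq, Fin.sum_univ_four] at h0 h1 h2 h3
  simp [lc, sg] at h0 h1 h2 h3
  have hd : ∀ μ m, z μ μ m = 0 := fun μ m => by have := hanti μ μ m; omega
  have a10 := hanti 1 0
  have a20 := hanti 2 0
  have a30 := hanti 3 0
  have a21 := hanti 2 1
  have a31 := hanti 3 1
  have a32 := hanti 3 2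
  simp only [a10, a20, a30, a21, a31, a32] at h0 h1 h2 h3
  unfold e
  fin_cases τ <;> fin_cases ρ <;> fin_cases σ <;>
    simp [hd, a10, a20, a30, a21, a31, a32] <;> linarith

variable [NeZero L]

def B (x y : Fin 4 → Fin 4 → Pt L → ℤ) (μ ν ρ σ : Fin 4) : ℤ :=
  ∑ n : Pt L, x μ ν n * y ρ σ (n + e L μ + e L ν)

def F (x y : Fin 4 → Fin 4 → Pt L → ℤ) : ℤ :=
  B x y 0 1 2 3 + B x y 2 3 0 1 - B x y 0 2 1 3 - B x y 1 3 0 2 + B x y 0 3 1 2 + B x y 1 2 0 3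

theorem sum_eq (z : Fin 4 → Fin 4 → Pt L → ℤ)
    (hanti : ∀ μ ν n, z μ ν n = - z ν μ n) :
    ∑ n : Fin 4 → ZMod L,
            ∑ μ : Fin 4, ∑ ν : Fin 4, ∑ ρ : Fin 4, ∑ σ : Fin 4,
              levicivita μ ν ρ σ * z μ ν n *
                z ρ σ (n + Pi.single μ 1 + Pi.single ν 1) = 4 * F z z := by
  unfold F B e
  simp only [← Finset.sum_add_distrib, ← Finset.sum_sub_distrib, Finset.mul_sum]
  refine Finset.sum_congr rfl fun n _ => ?_
  have a10 := hanti 1 0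
  have a20 := hanti 2 0
  have a30 := hanti 3 0
  have a21 := hanti 2 1
  have a31 := hanti 3 1
  have a32 := hanti 3 2
  simp only [lc_eq, Fin.sum_univ_four]
  simp [lc, sg]
  simp only [a10, a20, a30, a21, a31, a32]
  have c : ∀ μ ν : Fin 4, n + Pi.single μ 1 + Pi.single ν 1
    = n + Pi.single ν 1 + Pi.single μ 1 := fun μ ν => add_right_comm _ _ _
  rw [c 1 0, c 2 0, c 3 0, c 2 1, c 3 1, c 3 2]
  ring

/-- Coboundary pairing, summed by parts. -/
def C (z : Fin 4 → Fin 4 → Pt L → ℤ) (l : Pt L → ℤ) (μ ν ρ : Fin 4) : ℤ :=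
  ∑ m : Pt L, (z μ ν (m + e L ρ) - z μ ν m) * l (m + (e L μ + e L ν + e L ρ))

theorem C_eq (z : Fin 4 → Fin 4 → Pt L → ℤ) (l : Pt L → ℤ) (μ ν ρ : Fin 4) :
    ∑ n : Pt L, z μ ν n * (l (n + e L μ + e L ν + e L ρ) - l (n + e L μ + e L ν))
      = - C z l μ ν ρ := by
  have h : ∑ n : Pt L, z μ ν n * l (n + e L μ + e L ν)
      = ∑ m : Pt L, z μ ν (m + e L ρ) * l (m + (e L μ + e L ν + e L ρ)) := by
    rw [← Equiv.sum_comp (Equiv.addRight (e L ρ))]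
    refine Finset.sum_congr rfl fun n _ => ?_
    simp only [Equiv.coe_addRight]
    congr 2
    abel
  unfold C
  simp only [mul_sub, sub_mul, Finset.sum_sub_distrib, h]
  simp only [← add_assoc]
  ring

theorem C_cyc (z : Fin 4 → Fin 4 → Pt L → ℤ) (hz : Closed z) (l : Pt L → ℤ) (μ ν ρ : Fin 4) :
    C z l μ ν ρ + C z l ν ρ μ + C z l ρ μ ν = 0 := by
  unfold C
  rw [← Finset.sum_add_distrib, ← Finset.sum_add_distrib]
  refine Finset.sum_eq_zero fun m _ => ?_
  have h := hz ρ μ ν m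
  have e1 : e L ν + e L ρ + e L μ = e L μ + e L ν + e L ρ := by abel
  have e2 : e L ρ + e L μ + e L ν = e L μ + e L ν + e L ρ := by abel
  rw [e1, e2, ← add_mul, ← add_mul]
  have : z μ ν (m + e L ρ) - z μ ν m + (z ν ρ (m + e L μ) - z ν ρ m) +
    (z ρ μ (m + e L ν) - z ρ μ m) = 0 := by linarith
  rw [this, zero_mul]

theorem C_anti (z : Fin 4 → Fin 4 → Pt L → ℤ) (hanti : ∀ μ ν n, z μ ν n = - z ν μ n)
    (l : Pt L → ℤ) (μ ν ρ : Fin 4) : C z l μ ν ρ = - C z l ν μ ρ := by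
  unfold C
  rw [← Finset.sum_neg_distrib]
  refine Finset.sum_congr rfl fun n _ => ?_
  rw [hanti μ ν, hanti μ ν, add_comm (e L μ)]
  ring

def T (a : Pt L) (y : Fin 4 → Fin 4 → Pt L → ℤ) : Fin 4 → Fin 4 → Pt L → ℤ :=
  fun μ ν n => y μ ν (n + a)

theorem closed_T (a : Pt L) (y : Fin 4 → Fin 4 → Pt L → ℤ) (hy : Closed y) :
    Closed (T a y) := by
  intro τ ρ σ n
  have := hy τ ρ σ (n + a)
  unfold T
  simpa only [add_right_comm n _ a] using this

theorem B_diff (z y : Fin 4 → Fin 4 → Pt L → ℤ) (hy : Closed y)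
    (hanti : ∀ μ ν n, y μ ν n = - y ν μ n) (τ μ ν ρ σ : Fin 4) :
    B z (T (e L τ) y) μ ν ρ σ - B z y μ ν ρ σ = - C z (y τ σ) μ ν ρ + C z (y τ ρ) μ ν σ := by
  rw [← C_eq, ← neg_neg (C z (y τ ρ) μ ν σ), ← C_eq]
  unfold B T
  rw [← Finset.sum_sub_distrib, ← Finset.sum_neg_distrib, ← Finset.sum_add_distrib]
  refine Finset.sum_congr rfl fun n _ => ?_
  have h := hy τ ρ σ (n + e L μ + e L ν)
  rw [hanti σ τ, hanti σ τ] at h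
  have h' : y ρ σ (n + e L μ + e L ν + e L τ) = y ρ σ (n + e L μ + e L ν)
    + (y τ σ (n + e L μ + e L ν + e L ρ) - y τ σ (n + e L μ + e L ν))
    - (y τ ρ (n + e L μ + e L ν + e L σ) - y τ ρ (n + e L μ + e L ν)) := by linarith
  rw [h']
  ring

theorem F_step (z y : Fin 4 → Fin 4 → Pt L → ℤ) (hz : Closed z)
    (hza : ∀ μ ν n, z μ ν n = - z ν μ n) (hy : Closed y)
    (hanti : ∀ μ ν n, y μ ν n = - y ν μ n) (τ : Fin 4) :
    F z (T (e L τ) y) = F z y := by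
  have d := B_diff z y hy hanti τ
  have d1 := d 0 1 2 3
  have d2 := d 2 3 0 1
  have d3 := d 0 2 1 3
  have d4 := d 1 3 0 2
  have d5 := d 0 3 1 2
  have d6 := d 1 2 0 3
  have c3 := C_cyc z hz (y τ 3) 0 1 2
  have c2 := C_cyc z hz (y τ 2) 0 1 3
  have c1 := C_cyc z hz (y τ 1) 0 2 3
  have c0 := C_cyc z hz (y τ 0) 1 2 3
  rw [C_anti z hza _ 2 0 1] at c3
  rw [C_anti z hza _ 3 0 1] at c2
  rw [C_anti z hza _ 3 0 2] at c1
  rw [C_anti z hza _ 3 1 2] at c0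
  unfold F
  linarith

theorem F_iter (z : Fin 4 → Fin 4 → Pt L → ℤ) (hz : Closed z)
    (hza : ∀ μ ν n, z μ ν n = - z ν μ n) (τ : Fin 4) (a : Pt L) (k : ℕ) :
    F z (T (a + k • e L τ) z) = F z (T a z) := by
  induction k with
  | zero => simp
  | succ k ih =>
    rw [← ih, ← F_step z (T (a + k • e L τ) z) hz hza (closed_T _ _ hz) (fun _ _ _ => hza _ _ _) τ]
    congr 1
    funext μ ν n
    unfold T
    congr 1
    rw [succ_nsmul]
    abel

theorem B_swap (z : Fin 4 → Fin 4 → Pt L → ℤ) (a : Pt L) (μ ν ρ σ : Fin 4)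
    (h : e L μ + e L ν + e L ρ + e L σ + (a + a) = 0) :
    B z (T a z) ρ σ μ ν = B z (T a z) μ ν ρ σ := by
  unfold B T
  rw [← Equiv.sum_comp (Equiv.addRight (e L μ + e L ν + a))]
  refine Finset.sum_congr rfl fun n _ => ?_
  simp only [Equiv.coe_addRight]
  have h1 : n + (e L μ + e L ν + a) + e L ρ + e L σ + a = n := by
    calc _ = n + (e L μ + e L ν + e L ρ + e L σ + (a + a)) := by abel
      _ = n := by rw [h, add_zero]
  rw [h1, mul_comm]
  congr 2
  abel

theorem odd_case (hL : Odd L) (z : Fin 4 → Fin 4 → Pt L → ℤ) (hz : Closed z)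
    (hza : ∀ μ ν n, z μ ν n = - z ν μ n) : ∃ k, F z z = 2 * k := by
  obtain ⟨k, hk⟩ := hL
  set a : Pt L := 0 + k • e L 0 + k • e L 1 + k • e L 2 + k • e L 3 with ha
  have h0 : F z (T a z) = F z z := by
    rw [ha, F_iter z hz hza, F_iter z hz hza, F_iter z hz hza, F_iter z hz hza]
    congr 1
    funext μ ν n
    simp [T]
  have hp : ∀ x : Pt L, x + (k • x + k • x) = 0 := by
    intro x
    have : x + (k • x + k • x) = (2 * k + 1) • x := by
      rw [add_smul, mul_smul, one_smul, two_smul]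
      abel
    rw [this, ← hk]
    funext i
    simp
  have hs : e L 0 + e L 1 + e L 2 + e L 3 + (a + a) = 0 := by
    calc _ = (e L 0 + (k • e L 0 + k • e L 0)) + (e L 1 + (k • e L 1 + k • e L 1))
        + (e L 2 + (k • e L 2 + k • e L 2)) + (e L 3 + (k • e L 3 + k • e L 3)) := by
          rw [ha]; abel
      _ = 0 := by simp only [hp, add_zero]
  have s1 := B_swap z a 0 1 2 3 hs
  have s2 := B_swap z a 0 2 1 3 (by rw [← hs]; abel)
  have s3 := B_swap z a 0 3 1 2 (by rw [← hs]; abel)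
  refine ⟨B z (T a z) 0 1 2 3 - B z (T a z) 0 2 1 3 + B z (T a z) 0 3 1 2, ?_⟩
  rw [← h0]
  unfold F
  linarith

/-! Collapse of one slice, from size `L + 1` to size `L`. -/

def p (i : ZMod (L + 1)) : ZMod L := (i.val : ZMod L)

def w (i : ZMod (L + 1)) : ℤ := if i.val = L then 0 else 1

theorem p_succ (i : ZMod (L + 1)) (h : w i ≠ 0) : p (i + 1) = p i + 1 := by
  have h1 : i.val ≠ L := by
    intro hh; apply h; simp [w, hh]
  have h2 : i.val < L + 1 := ZMod.val_lt i
  have : (i + 1).val = i.val + 1 := by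
    have hL0 : L ≠ 0 := NeZero.ne L
    have h3 : (1 : ZMod (L + 1)).val = 1 := ZMod.val_one'' (by omega)
    rw [ZMod.val_add_of_lt (by omega), h3]
  unfold p
  rw [this]
  push_cast
  rfl

theorem p_succ' (i : ZMod (L + 1)) (h : w i = 0) : p (i + 1) = p i := by
  have h1 : i.val = L := by
    by_contra hh; simp [w, hh] at h
  have h2 : i = (L : ZMod (L + 1)) := by
    rw [← ZMod.natCast_zmod_val i, h1]
  have h3 : i + 1 = 0 := by
    rw [h2]; exact_mod_cast ZMod.natCast_self (L + 1)
  rw [h3]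
  unfold p
  rw [h1]
  simp

def P (n : Pt (L + 1)) : Pt L := fun i => p (n i)

theorem P_succ (n : Pt (L + 1)) (μ : Fin 4) (h : w (n μ) ≠ 0) :
    P (n + e (L + 1) μ) = P n + e L μ := by
  funext i
  by_cases hi : i = μ
  · subst hi
    simp [P, e, p_succ _ h]
  · simp [P, e, hi]

theorem P_succ' (n : Pt (L + 1)) (μ : Fin 4) (h : w (n μ) = 0) :
    P (n + e (L + 1) μ) = P n := by
  funext i
  by_cases hi : i = μ
  · subst hi
    simp [P, e, p_succ' _ h]
  · simp [P, e, hi]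

theorem sum_pull (g : Pt L → ℤ) :
    ∑ n : Pt (L + 1), w (n 0) * w (n 1) * w (n 2) * w (n 3) * g (P n) = ∑ n : Pt L, g n := by
  symm
  have hv : ∀ j : ZMod L, ((j.val : ℕ) : ZMod (L + 1)).val = j.val := fun j =>
    ZMod.val_natCast_of_lt (by have := ZMod.val_lt j; omega)
  have hp : ∀ j : ZMod L, p ((j.val : ℕ) : ZMod (L + 1)) = j := by
    intro j
    unfold p
    rw [hv, ZMod.natCast_zmod_val]
  have hw : ∀ j : ZMod L, w ((j.val : ℕ) : ZMod (L + 1)) = 1 := by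
    intro j
    unfold w
    rw [hv, if_neg (ZMod.val_lt j).ne]
  have hP : ∀ n : Pt L, P (fun i => ((n i).val : ZMod (L + 1))) = n := fun n => by
    funext i
    exact hp (n i)
  refine Finset.sum_of_injOn (fun n i => ((n i).val : ZMod (L + 1))) ?_ ?_ ?_ ?_
  · intro n _ m _ h
    rw [← hP n, ← hP m]
    exact congrArg P h
  · intro n _
    simp
  · intro n _ hn
    by_contra hne
    apply hn
    have hall : ∀ i, w (n i) ≠ 0 := by
      intro i hi
      apply hne
      fin_cases i <;> simp_all
    refine ⟨P n, by simp, ?_⟩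
    funext i
    have h1 : (n i).val ≠ L := by
      intro hh; apply hall i; simp [w, hh]
    have h2 := ZMod.val_lt (n i)
    simp only [P, p]
    rw [ZMod.val_natCast_of_lt (by omega), ZMod.natCast_zmod_val]
  · intro n _
    simp only [hw, hP]
    ring

def pull (z : Fin 4 → Fin 4 → Pt L → ℤ) : Fin 4 → Fin 4 → Pt (L + 1) → ℤ :=
  fun μ ν n => w (n μ) * w (n ν) * z μ ν (P n)

theorem e_ne (n : Pt (L + 1)) {μ ν : Fin 4} (h : ν ≠ μ) : (n + e (L + 1) μ) ν = n ν := by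
  simp [e, h]

theorem w_mul (i : ZMod (L + 1)) : w i = 0 ∨ w i = 1 := by
  unfold w
  split_ifs <;> simp

theorem pull_diff (z : Fin 4 → Fin 4 → Pt L → ℤ) (n : Pt (L + 1)) {τ ρ σ : Fin 4}
    (h1 : ρ ≠ τ) (h2 : σ ≠ τ) :
    pull z ρ σ (n + e (L + 1) τ) - pull z ρ σ n
      = w (n τ) * w (n ρ) * w (n σ) * (z ρ σ (P n + e L τ) - z ρ σ (P n)) := by
  unfold pull
  rw [e_ne n h1, e_ne n h2]
  rcases w_mul (n τ) with h | h
  · rw [P_succ' n τ h, h]; ring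
  · rw [P_succ n τ (by rw [h]; simp), h]; ring

theorem pull_anti (z : Fin 4 → Fin 4 → Pt L → ℤ) (hza : ∀ μ ν n, z μ ν n = - z ν μ n) :
    ∀ μ ν n, pull z μ ν n = - pull z ν μ n := by
  intro μ ν n
  unfold pull
  rw [hza μ ν]
  ring

theorem pull_closed (z : Fin 4 → Fin 4 → Pt L → ℤ) (hz : Closed z)
    (hza : ∀ μ ν n, z μ ν n = - z ν μ n) : Closed (pull z) := by
  intro τ ρ σ n
  have ha := pull_anti z hza
  have hd : ∀ μ m, pull z μ μ m = 0 := fun μ m => by have := ha μ μ m; omega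
  by_cases h1 : ρ = τ
  · subst h1
    rw [hd, hd, ha σ ρ, ha σ ρ]; ring
  by_cases h2 : σ = τ
  · subst h2
    rw [hd, hd, ha ρ σ, ha ρ σ]; ring
  by_cases h3 : ρ = σ
  · subst h3
    rw [hd, hd, ha ρ τ, ha ρ τ]; ring
  rw [pull_diff z n h1 h2, pull_diff z n (Ne.symm h3) (Ne.symm h1),
    pull_diff z n (Ne.symm h2) h3]
  have := hz τ ρ σ (P n)
  linear_combination w (n τ) * w (n ρ) * w (n σ) * this

theorem B_pull (z : Fin 4 → Fin 4 → Pt L → ℤ) (μ ν ρ σ : Fin 4) (h0 : ν ≠ μ)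
    (h1 : ρ ≠ μ) (h2 : σ ≠ μ) (h3 : ρ ≠ ν) (h4 : σ ≠ ν)
    (hw : ∀ f : Fin 4 → ℤ, f μ * f ν * f ρ * f σ = f 0 * f 1 * f 2 * f 3) :
    B (pull z) (pull z) μ ν ρ σ = B z z μ ν ρ σ := by
  unfold B
  rw [← sum_pull (fun n : Pt L => z μ ν n * z ρ σ (n + e L μ + e L ν))]
  refine Finset.sum_congr rfl fun n _ => ?_
  rw [← hw (fun i => w (n i))]
  unfold pull
  rw [e_ne _ h3, e_ne _ h4, e_ne _ h1, e_ne _ h2]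
  rcases w_mul (n μ) with h | h
  · rw [h]; ring
  rcases w_mul (n ν) with h' | h'
  · rw [h']; ring
  rw [P_succ _ ν (by rw [e_ne _ h0, h']; simp), P_succ _ μ (by rw [h]; simp)]
  ring

theorem F_pull (z : Fin 4 → Fin 4 → Pt L → ℤ) : F (pull z) (pull z) = F z z := by
  unfold F
  rw [B_pull z 0 1 2 3, B_pull z 2 3 0 1, B_pull z 0 2 1 3, B_pull z 1 3 0 2,
    B_pull z 0 3 1 2, B_pull z 1 2 0 3] <;> first | decide | (intro f; ring)

theorem main (L : ℕ) [NeZero L] (hL : 2 ≤ L) (z : Fin 4 → Fin 4 → Pt L → ℤ)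
    (hza : ∀ μ ν n, z μ ν n = - z ν μ n) (hz : Closed z) : ∃ k, F z z = 2 * k := by
  rcases Nat.even_or_odd L with h | h
  · rw [← F_pull]
    exact odd_case h.add_one _ (pull_closed z hz hza) (pull_anti z hza)
  · exact odd_case h z hz hza

end PS

/-- For an exactly flat antisymmetric integer field `z̄_{μν}(n)` on the
periodic lattice `Λ = (ℤ/Lℤ)⁴`, the lattice Pontryagin-square sum
`(1/8) Σ_{n∈Λ} Σ ε_{μνρσ} z̄_{μν}(n) z̄_{ρσ}(n+μ̂+ν̂)` is an integer; in particular, for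
every `N ≥ 1` the fractional part of the topological charge lies in `(1/N)·ℤ`. -/
theorem pontryagin_square_integral
    (L : ℕ) [NeZero L] (hL : 2 ≤ L)
    (zb : Fin 4 → Fin 4 → (Fin 4 → ZMod L) → ℤ)
    (hanti : ∀ μ ν n, zb μ ν n = - zb ν μ n)
    (hflat : ∀ (μ : Fin 4) (n : Fin 4 → ZMod L),
      ∑ ν : Fin 4, ∑ ρ : Fin 4, ∑ σ : Fin 4,
        levicivita μ ν ρ σ * (zb ρ σ (n + Pi.single ν 1) - zb ρ σ n) = 0) :
    (∃ k : ℤ,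
        ((1 : ℚ) / 8) * ∑ n : Fin 4 → ZMod L,
            ∑ μ : Fin 4, ∑ ν : Fin 4, ∑ ρ : Fin 4, ∑ σ : Fin 4,
              (levicivita μ ν ρ σ : ℚ) * (zb μ ν n : ℚ) *
                (zb ρ σ (n + Pi.single μ 1 + Pi.single ν 1) : ℚ)
          = (k : ℚ)) ∧
      ∀ N : ℕ, 1 ≤ N → ∃ k : ℤ,
        -((1 : ℚ) / (8 * (N : ℚ))) * ∑ n : Fin 4 → ZMod L,
            ∑ μ : Fin 4, ∑ ν : Fin 4, ∑ ρ : Fin 4, ∑ σ : Fin 4,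
              (levicivita μ ν ρ σ : ℚ) * (zb μ ν n : ℚ) *
                (zb ρ σ (n + Pi.single μ 1 + Pi.single ν 1) : ℚ)
          = (k : ℚ) / (N : ℚ) := by
  obtain ⟨k, hk⟩ := PS.main L hL zb hanti (PS.closed_of_flat zb hanti hflat)
  have hS : ∑ n : Fin 4 → ZMod L,
            ∑ μ : Fin 4, ∑ ν : Fin 4, ∑ ρ : Fin 4, ∑ σ : Fin 4,
              (levicivita μ ν ρ σ : ℚ) * (zb μ ν n : ℚ) *
                (zb ρ σ (n + Pi.single μ 1 + Pi.single ν 1) : ℚ) = 8 * (k : ℚ) := by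
    have h := PS.sum_eq zb hanti
    rw [hk] at h
    have h2 := congrArg (Int.cast : ℤ → ℚ) h
    push_cast at h2
    rw [h2]; ring
  rw [hS]
  refine ⟨⟨k, by ring⟩, fun N hN => ⟨-k, ?_⟩⟩
  have hN' : (N : ℚ) ≠ 0 := by positivity
  push_cast
  field_simp

end
end
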